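/- Let E = (C, V) be an election with |V| = n voters, and let A, B be disjoint sets of candidates, each of size m·n, disjoint from C. Then for each candidate c_i ∈ C there exists a single-crossing election on candidate set A ∪ B ∪ {c_i} with voter list V' = (v'_1, ..., v'_n) such that pos_{v'_j}(c_i) = m·n + pos_{v_j}(c_i) for each j ∈ [n], and moreover prepending the vote a_1 ≻ ⋯ ≻ a_{mn} ≻ c_i ≻ b_1 ≻ ⋯ ≻ b_{mn} and appending the vote b_1 ≻ ⋯ ≻ b_{mn} ≻ c_i ≻ a_1 ≻ ⋯ ≻ a_{mn} preserves the single-crossing property. -/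

import Mathlib

/-- Position of candidate `k` when `x` of the `a`s have moved behind `ci` and `y` of the `b`s before it. -/
def adjPos (N x y k : ℕ) : ℕ :=
  if k < N - x then k else if k < N then k + y + 1 else if k = N then N - x + y
  else if k ≤ N + y then k - 1 - x else k

theorem adjPos_lt {N x y k : ℕ} (hx : x ≤ N) (hy : y ≤ N) (hk : k < 2 * N + 1) :
    adjPos N x y k < 2 * N + 1 := by
  unfold adjPos; split_ifs <;> omega

theorem adjPos_inj {N x y k l : ℕ} (hx : x ≤ N) (hy : y ≤ N)
    (h : adjPos N x y k = adjPos N x y l) : k = l := by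
  unfold adjPos at h; split_ifs at h <;> omega

theorem adjPos_mono {N x y x' y' k l : ℕ} (hx : x ≤ x') (hy : y ≤ y') (hx' : x' ≤ N)
    (hy' : y' ≤ N) (hkl : k < l) (h : adjPos N x' y' k < adjPos N x' y' l) :
    adjPos N x y k < adjPos N x y l := by
  unfold adjPos at *; split_ifs at h <;> split_ifs <;> omega

theorem exists_threshold {n : ℕ} (P : Fin n → Prop) (hP : ∀ v w, v ≤ w → P w → P v) :
    ∃ t : ℕ, ∀ v : Fin n, P v ↔ (v : ℕ) < t := by
  classical
  by_cases h : ∃ k, ∃ hk : k < n, ¬ P ⟨k, hk⟩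
  · refine ⟨Nat.find h, fun v => ⟨fun hv => ?_, fun hv => ?_⟩⟩
    · by_contra hc
      obtain ⟨h1, h2⟩ := Nat.find_spec h
      exact h2 (hP _ v (by rw [Fin.le_def]; simpa using hc) hv)
    · by_contra hc
      exact Nat.find_min h hv ⟨v.2, hc⟩
  · push Not at h
    exact ⟨n, fun v => ⟨fun _ => v.2, fun _ => h v v.2⟩⟩

/-- Number of `a`s moved behind `ci` (for `q = 0`), respectively of `b`s moved before it. -/
def adjNum (m n : ℕ) (q : Fin n → ℕ) (v : ℕ) : ℕ :=
  if v = 0 then 0 else if h : v - 1 < n then m * (v - 1) + q ⟨v - 1, h⟩ else m * n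

theorem adjNum_le {m n : ℕ} (q : Fin n → ℕ) (hq : ∀ j, q j < m) (v : ℕ) :
    adjNum m n q v ≤ m * n := by
  unfold adjNum
  split_ifs with h1 h2
  · omega
  · have := hq ⟨v - 1, h2⟩
    have h3 : m * (v - 1 + 1) ≤ m * n := Nat.mul_le_mul_left m h2
    rw [Nat.mul_add] at h3
    omega
  · omega

theorem adjNum_mono {m n : ℕ} (q : Fin n → ℕ) (hq : ∀ j, q j < m) {v w : ℕ} (hvw : v ≤ w) :
    adjNum m n q v ≤ adjNum m n q w := by
  rcases hvw.eq_or_lt with rfl | hlt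
  · exact le_rfl
  by_cases hw : w - 1 < n
  · by_cases h1 : v = 0
    · simp [adjNum, h1]
    have h2 : v - 1 < n := by omega
    have h0 : w ≠ 0 := by omega
    simp only [adjNum, h1, h2, h0, hw, if_false, dif_pos]
    have := hq ⟨v - 1, h2⟩
    have h3 : m * (v - 1 + 1) ≤ m * (w - 1) := Nat.mul_le_mul_left m (by omega)
    rw [Nat.mul_add] at h3
    omega
  · have h0 : w ≠ 0 := by omega
    have := adjNum_le q hq v
    have e : adjNum m n q w = m * n := by simp [adjNum, h0, hw]
    omega

/-- the `Adj` construction. Given an election on candidates `Fin m`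
with `n` voters (voter `v` ranks candidate `c` in 1-based position
`(prefs v c : ℕ) + 1`) and disjoint sets `A = {a_1, …, a_{mn}}`,
`B = {b_1, …, b_{mn}}` of fresh candidates, for each candidate `ci` there is a
single-crossing election on `A ∪ B ∪ {ci}` — encoded as `Fin (2*(m*n)+1)` with
index `k < m*n` standing for `a_{k+1}`, index `m*n` for `ci`, and index
`m*n + 1 + k` for `b_{k+1}` — with `n + 2` voters `v'_0, v'_1, …, v'_n, v'_{n+1}`
such that: the `n` middle voters rank `ci` in position `m*n + pos_{v_j}(ci)`, the
prepended voter `v'_0` has order `a_1 ≻ ⋯ ≻ a_{mn} ≻ ci ≻ b_1 ≻ ⋯ ≻ b_{mn}`, the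
appended voter `v'_{n+1}` has order `b_1 ≻ ⋯ ≻ b_{mn} ≻ ci ≻ a_1 ≻ ⋯ ≻ a_{mn}`,
and the whole `(n+2)`-voter profile is single-crossing. -/
theorem adj_construction {m n : ℕ} (hm : 0 < m) (hn : 0 < n)
    (prefs : Fin n → (Fin m ≃ Fin m)) (ci : Fin m) :
    ∃ prefs' : Fin (n + 2) → (Fin (2 * (m * n) + 1) ≃ Fin (2 * (m * n) + 1)),
      -- the whole (n+2)-voter profile is single-crossing
      (∀ a b : Fin (2 * (m * n) + 1),
        (prefs' ⟨0, by omega⟩ a : ℕ) < prefs' ⟨0, by omega⟩ b →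
        ∃ t : ℕ, ∀ v : Fin (n + 2),
          ((prefs' v a : ℕ) < prefs' v b ↔ (v : ℕ) < t)) ∧
      -- the position of ci for each middle voter v'_{j+1} is m*n + pos_{v_j}(ci)
      (∀ j : Fin n,
        (prefs' ⟨(j : ℕ) + 1, by omega⟩ ⟨m * n, by omega⟩ : ℕ) + 1 =
          m * n + ((prefs j ci : ℕ) + 1)) ∧
      -- the prepended voter v'_0 : a_1 ≻ ⋯ ≻ a_{mn} ≻ ci ≻ b_1 ≻ ⋯ ≻ b_{mn}
      (prefs' ⟨0, by omega⟩ = Equiv.refl (Fin (2 * (m * n) + 1))) ∧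
      -- the appended voter v'_{n+1} : b_1 ≻ ⋯ ≻ b_{mn} ≻ ci ≻ a_1 ≻ ⋯ ≻ a_{mn}
      (∀ cand : Fin (2 * (m * n) + 1),
        (prefs' ⟨n + 1, by omega⟩ cand : ℕ) + 1 =
          if (cand : ℕ) < m * n then m * n + 2 + (cand : ℕ)
          else if (cand : ℕ) = m * n then m * n + 1
          else (cand : ℕ) - m * n) := by
  have hq0 : ∀ j : Fin n, (fun _ : Fin n => 0) j < m := fun _ => hm
  have hq1 : ∀ j : Fin n, (fun j : Fin n => (prefs j ci : ℕ)) j < m := fun j => (prefs j ci).2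
  set q0 : Fin n → ℕ := fun _ => 0 with hq0d
  set q1 : Fin n → ℕ := fun j => (prefs j ci : ℕ) with hq1d
  let f : Fin (n + 2) → Fin (2 * (m * n) + 1) → Fin (2 * (m * n) + 1) := fun v k =>
    ⟨adjPos (m * n) (adjNum m n q0 v) (adjNum m n q1 v) k,
      adjPos_lt (adjNum_le q0 hq0 v) (adjNum_le q1 hq1 v) k.2⟩
  have hf : ∀ v, Function.Bijective (f v) := fun v => by
    apply Finite.injective_iff_bijective.mp
    intro k l h
    exact Fin.ext (adjPos_inj (adjNum_le q0 hq0 v) (adjNum_le q1 hq1 v) (Fin.ext_iff.mp h))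
  have z : ∀ k, k < 2 * (m * n) + 1 → adjPos (m * n) 0 0 k = k := fun k hk => by
    unfold adjPos; split_ifs <;> omega
  have a0 : ∀ q : Fin n → ℕ, adjNum m n q 0 = 0 := fun q => by simp [adjNum]
  have al : ∀ q : Fin n → ℕ, adjNum m n q (n + 1) = m * n := fun q => by simp [adjNum]
  refine ⟨fun v => Equiv.ofBijective (f v) (hf v), ?_, ?_, ?_, ?_⟩
  · intro a b hab
    have hab' : (a : ℕ) < b := by
      simpa [f, a0, z _ a.2, z _ b.2] using hab
    apply exists_threshold
    intro v w hvw h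
    exact adjPos_mono (adjNum_mono q0 hq0 hvw) (adjNum_mono q1 hq1 hvw)
      (adjNum_le q0 hq0 w) (adjNum_le q1 hq1 w) hab' h
  · intro j
    have e0 : adjNum m n q0 (j + 1) = m * j := by simp [adjNum, q0]
    have e1 : adjNum m n q1 (j + 1) = m * j + prefs j ci := by simp [adjNum, q1]
    have hj : m * j ≤ m * n := Nat.mul_le_mul_left m j.2.le
    show adjPos (m * n) (adjNum m n q0 (j + 1)) (adjNum m n q1 (j + 1)) (m * n) + 1 = _
    rw [e0, e1]
    unfold adjPos
    split_ifs <;> omega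
  · ext k
    show adjPos (m * n) (adjNum m n q0 0) (adjNum m n q1 0) k = k
    rw [a0, a0, z _ k.2]
  · intro k
    show adjPos (m * n) (adjNum m n q0 (n + 1)) (adjNum m n q1 (n + 1)) k + 1 = _
    rw [al, al]
    have := k.2
    unfold adjPos
    split_ifs <;> omega
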